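/- arXiv:2206.03465 — 2 statements merged into one kernel-verified Lean document; each statement's English description precedes it below -/
import Mathlib

section
/- Let G be a group, T a set, and let g ∈ G and t ∈ T. Then the commutator [g, t] = g·t·g^{-1}·t^{-1}, as an element of the free product G ∗ F_T, is sufficiently generic. -/
/-- The permutation matrix of a permutation `σ` of `{1,…,n}`: the 0–1 matrix whose
`(i,j)` entry is `1` exactly when `i = σ j`. -/
def permMatrix {n : ℕ} (R : Type*) [Zero R] [One R] (σ : Equiv.Perm (Fin n)) :
    Matrix (Fin n) (Fin n) R :=
  Matrix.of fun i j => if i = σ j then 1 else 0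

/-- An element `x` of the free product `G ∗ F_T` (of a group `G` with the free group on a
set `T`) is *sufficiently generic* if for every field `L` containing `ℂ`, every `n ≥ 1` and
every group homomorphism `ρ : G ∗ F_T → GL_n(L)` such that (a) each `ρ(h)`, for `h ∈ G`, is
the identity matrix or the permutation matrix of a derangement, and (b) the family of all
entries of the matrices `ρ(t')`, `t' ∈ T`, is algebraically independent over `ℂ`, the
matrix `ρ(x) − I_n` is invertible or zero. -/
def SufficientlyGeneric (G : Type*) [Group G] (T : Type*)
    (x : Monoid.Coprod G (FreeGroup T)) : Prop :=
  ∀ (L : Type*) [Field L] [Algebra ℂ L] (n : ℕ), 1 ≤ n →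
    ∀ ρ : Monoid.Coprod G (FreeGroup T) →* Matrix.GeneralLinearGroup (Fin n) L,
      (∀ h : G, ((ρ (Monoid.Coprod.inl h) : Matrix (Fin n) (Fin n) L) = 1 ∨
        ∃ σ : Equiv.Perm (Fin n), (∀ i, σ i ≠ i) ∧
          (ρ (Monoid.Coprod.inl h) : Matrix (Fin n) (Fin n) L) = permMatrix L σ)) →
      AlgebraicIndependent ℂ
        (fun p : T × Fin n × Fin n =>
          (ρ (Monoid.Coprod.inr (FreeGroup.of p.1)) : Matrix (Fin n) (Fin n) L) p.2.1 p.2.2) →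
      (IsUnit ((ρ x : Matrix (Fin n) (Fin n) L) - 1) ∨
        ((ρ x : Matrix (Fin n) (Fin n) L) - 1 = 0))

lemma permMatrix_map_aux {n : ℕ} {R S : Type*} [CommRing R] [CommRing S] (f : R →+* S)
    (σ : Equiv.Perm (Fin n)) : f.mapMatrix (permMatrix R σ) = permMatrix S σ := by
  ext i j
  simp only [permMatrix, RingHom.mapMatrix_apply, Matrix.map_apply, Matrix.of_apply]
  split_ifs <;> simp

lemma det_comm_diag_aux {n : ℕ} (σ : Equiv.Perm (Fin n)) (hσ : ∀ i, σ i ≠ i) :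
    (permMatrix ℂ σ * Matrix.diagonal (fun i : Fin n => ((i : ℕ) : ℂ))
      - Matrix.diagonal (fun i : Fin n => ((i : ℕ) : ℂ)) * permMatrix ℂ σ).det ≠ 0 := by
  have h : permMatrix ℂ σ * Matrix.diagonal (fun i : Fin n => ((i : ℕ) : ℂ))
      - Matrix.diagonal (fun i : Fin n => ((i : ℕ) : ℂ)) * permMatrix ℂ σ
      = permMatrix ℂ σ * Matrix.diagonal (fun j : Fin n => ((j : ℕ) : ℂ) - ((σ j : ℕ) : ℂ)) := by
    ext i j
    simp only [permMatrix, Matrix.sub_apply, Matrix.mul_diagonal, Matrix.diagonal_mul,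
      Matrix.of_apply]
    split_ifs with h
    · subst h; ring
    · ring
  have hP : permMatrix ℂ σ = (Equiv.Perm.permMatrix ℂ σ⁻¹) := by
    ext i j
    simp only [permMatrix, Matrix.of_apply, Equiv.Perm.permMatrix, PEquiv.toMatrix_apply,
      Equiv.toPEquiv_apply, Option.mem_def, Option.some.injEq]
    congr 1
    simp [Equiv.symm_apply_eq]
  rw [h, Matrix.det_mul, Matrix.det_diagonal]
  refine mul_ne_zero ?_ (Finset.prod_ne_zero_iff.2 fun j _ => ?_)
  · rw [hP, Matrix.det_permutation]
    rcases Int.units_eq_one_or (Equiv.Perm.sign σ⁻¹) with h | h <;> rw [h] <;> simp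
  · rw [sub_ne_zero]
    intro e
    exact hσ j (Fin.ext (by exact_mod_cast e.symm))

/-- The commutator `[g, t] = g·t·g⁻¹·t⁻¹` in `G ∗ F_T` is sufficiently
generic. -/
theorem statement9 {G : Type*} [Group G] {T : Type*} (g : G) (t : T) :
    SufficientlyGeneric G T
      (Monoid.Coprod.inl g * Monoid.Coprod.inr (FreeGroup.of t) *
        (Monoid.Coprod.inl g)⁻¹ * (Monoid.Coprod.inr (FreeGroup.of t))⁻¹) := by
  intro L _ _ n _ ρ ha hb
  simp only [map_mul, map_inv]
  have hg := ha g
  generalize ρ (Monoid.Coprod.inl g) = P at hg ⊢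
  rcases hg with h1 | ⟨σ, hσ, hP⟩
  · right
    have : P = 1 := Units.ext h1
    subst this
    simp
  left
  set A := ρ (Monoid.Coprod.inr (FreeGroup.of t)) with hA
  have key : ((P : Matrix (Fin n) (Fin n) L) * A - A * P).det ≠ 0 := by
    intro h0
    let M : Matrix (Fin n) (Fin n) (MvPolynomial (T × Fin n × Fin n) ℂ) :=
      Matrix.of fun i j => MvPolynomial.X (t, i, j)
    let q := (permMatrix _ σ * M - M * permMatrix _ σ).det
    have hq : q = 0 := by
      apply hb.eq_zero_of_aeval_eq_zero
      rw [← AlgHom.coe_toRingHom, RingHom.map_det, map_sub, map_mul, map_mul,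
        permMatrix_map_aux, ← hP]
      refine Eq.trans ?_ h0
      have hM : (RingHom.mapMatrix (AlgHom.toRingHom (MvPolynomial.aeval (R := ℂ)
          (fun p : T × Fin n × Fin n =>
          (ρ (Monoid.Coprod.inr (FreeGroup.of p.1)) : Matrix (Fin n) (Fin n) L) p.2.1 p.2.2)))) M
          = (A : Matrix (Fin n) (Fin n) L) := by
        ext i j
        simp [M, hA]
      exact congrArg (fun B => ((P : Matrix (Fin n) (Fin n) L) * B - B * P).det) hM
    let e : T × Fin n × Fin n → ℂ := fun p => if p.2.1 = p.2.2 then ((p.2.1 : ℕ) : ℂ) else 0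
    apply det_comm_diag_aux σ hσ
    have := congrArg (MvPolynomial.eval e) hq
    rw [RingHom.map_det, map_sub, map_mul, map_mul, permMatrix_map_aux, map_zero] at this
    have hM : (MvPolynomial.eval e).mapMatrix M
        = Matrix.diagonal (fun i : Fin n => ((i : ℕ) : ℂ)) := by
      ext i j
      simp [M, e, Matrix.diagonal_apply]
    rwa [hM] at this
  have hu : IsUnit ((P : Matrix (Fin n) (Fin n) L) * A - A * P) :=
    (Matrix.isUnit_iff_isUnit_det _).2 (isUnit_iff_ne_zero.2 key)
  have := (hu.mul (P⁻¹).isUnit).mul (A⁻¹).isUnit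
  convert this using 1
  simp only [sub_mul, Units.val_mul]
  congr 1
  rw [mul_assoc (A : Matrix (Fin n) (Fin n) L), Units.mul_inv, mul_one, Units.mul_inv]
end

section
/- Let M be a connected matroid of rank at least two with rank function r on a finite ground set E, and let {X_e : Ω → Ω_e}_{e∈E} together with a discrete probability measure μ on Ω be a discrete probability space representation of M. Then M is entropic: there exists a real number λ > 0 such that r(A) = λ·H(X_A) for every A ⊆ E, where H(X_A) = Σ_y −P(X_A = y)·ln P(X_A = y) is the Shannon entropy of the joint map X_A (this sum converges for every A ⊆ E). -/
/-- `P(X = y)`: the total mass, under the point masses `p`, of the fiber of `X` over `y`. -/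
noncomputable def prMass {Ω S : Type*} (p : Ω → ℝ) (X : Ω → S) (y : S) : ℝ :=
  ∑' ω : {w : Ω // X w = y}, p ω.1

/-- The Shannon entropy `H(X) = Σ_y −P(X = y)·ln P(X = y)` (with `0·ln 0 = 0`). -/
noncomputable def entropy {Ω S : Type*} (p : Ω → ℝ) (X : Ω → S) : ℝ :=
  ∑' y : S, Real.negMulLog (prMass p X y)

/-- The joint map `X_A : Ω → Π_{e∈A} Ω_e`, `ω ↦ (X_e(ω))_{e∈A}`. -/
def jointRV {α Ω : Type*} {Ωe : α → Type*} (X : ∀ e, Ω → Ωe e) (A : Finset α) :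
    Ω → ((e : ↥A) → Ωe e.1) :=
  fun ω e => X e.1 ω

section aux
variable {Ω S T : Type*} {p : Ω → ℝ}

theorem aux_mass_pos (hp0 : ∀ ω, 0 ≤ p ω) (hs : Summable p) (X : Ω → S) (ω : Ω) (h : 0 < p ω) :
    0 < prMass p X (X ω) := by
  have h1 : Summable fun w : {w : Ω // X w = X ω} => p w.1 := hs.subtype {w | X w = X ω}
  exact h1.tsum_pos (fun _ => hp0 _) ⟨ω, rfl⟩ h

theorem aux_mass_nonneg (hp0 : ∀ ω, 0 ≤ p ω) (X : Ω → S) (y : S) : 0 ≤ prMass p X y :=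
  tsum_nonneg fun _ => hp0 _

theorem aux_mass_exists (hp0 : ∀ ω, 0 ≤ p ω) (X : Ω → S) (y : S) (h : prMass p X y ≠ 0) :
    ∃ ω, 0 < p ω ∧ X ω = y := by
  by_contra! hc
  apply h
  unfold prMass
  have : (fun w : {w : Ω // X w = y} => p w.1) = fun _ => 0 := by
    funext w
    by_contra hne
    exact hc w.1 (lt_of_le_of_ne (hp0 _) (Ne.symm hne)) w.2
  rw [this, tsum_zero]

theorem aux_mass_congr (X : Ω → S) (Y : Ω → T) (y : S) (z : T) (h : ∀ w, X w = y ↔ Y w = z) :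
    prMass p X y = prMass p Y z := by
  unfold prMass
  exact (Equiv.subtypeEquivRight h).tsum_eq (fun w : {w : Ω // Y w = z} => p w.1)

theorem aux_mass_hasSum (hs : Summable p) (X : Ω → S) : HasSum (prMass p X) (∑' ω, p ω) := by
  have h1 : HasSum (p ∘ Equiv.sigmaFiberEquiv X) (∑' ω, p ω) :=
    (Equiv.sigmaFiberEquiv X).hasSum_iff.2 hs.hasSum
  exact h1.sigma fun y => (hs.subtype {w | X w = y}).hasSum

end aux

section matroid
variable {α : Type*} [DecidableEq α] {r : Finset α → ℕ}

theorem aux_indep_subset (hr_le : ∀ A : Finset α, r A ≤ A.card)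
    (hr_submod : ∀ A B : Finset α, r (A ∪ B) + r (A ∩ B) ≤ r A + r B)
    {B D : Finset α} (hB : r B = B.card) (hD : D ⊆ B) : r D = D.card := by
  have h1 := hr_submod D (B \ D)
  rw [Finset.union_sdiff_of_subset hD] at h1
  have h2 := hr_le (B \ D)
  have h3 := Finset.card_sdiff_add_card_eq_card hD
  have h4 := hr_le D
  omega

theorem aux_circuit {S : Finset α} (hS : r S ≠ S.card) :
    ∃ C ⊆ S, r C ≠ C.card ∧ ∀ D ⊂ C, r D = D.card := by
  induction S using Finset.strongInduction with
  | H S ih =>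
    by_cases h : ∀ D ⊂ S, r D = D.card
    · exact ⟨S, subset_rfl, hS, h⟩
    · push Not at h
      obtain ⟨D, hD, hne⟩ := h
      obtain ⟨C, hC, h'⟩ := ih D hD hne
      exact ⟨C, hC.trans hD.1, h'⟩

theorem aux_basis (hr_le : ∀ A : Finset α, r A ≤ A.card)
    (hr_mono : ∀ ⦃A B : Finset α⦄, A ⊆ B → r A ≤ r B)
    (hr_submod : ∀ A B : Finset α, r (A ∪ B) + r (A ∩ B) ≤ r A + r B) (A : Finset α) :
    ∃ B ⊆ A, r B = B.card ∧ r B = r A := by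
  induction A using Finset.induction_on with
  | empty => exact ⟨∅, subset_rfl, by have := hr_le ∅; simp at this ⊢; exact this, rfl⟩
  | insert a A ha ih =>
    obtain ⟨B, hBA, hB, hBr⟩ := ih
    by_cases h : r (insert a A) = r A
    · exact ⟨B, hBA.trans (Finset.subset_insert _ _), hB, by omega⟩
    · refine ⟨insert a B, Finset.insert_subset_insert _ hBA, ?_⟩
      have h1 := hr_mono (Finset.subset_insert a A)
      have h2 := hr_submod A (insert a B)
      have h3 : A ∪ insert a B = insert a A := by
        ext; simp only [Finset.mem_union, Finset.mem_insert]
        have := @hBA; grind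
      have h4 : A ∩ insert a B = B := by
        ext; simp only [Finset.mem_inter, Finset.mem_insert]
        have := @hBA; grind
      rw [h3, h4] at h2
      have h5 := hr_le (insert a B)
      have h6 := Finset.card_insert_of_notMem (fun h => ha (hBA h))
      have h7 := hr_submod A {a}
      have h8 := hr_le {a}
      rw [Finset.union_comm, ← Finset.insert_eq] at h7
      simp at h8
      omega

end matroid


/-- Let `M` be a connected matroid of rank at least two with rank function
`r` on a finite ground set, and let `{X_e}` together with a discrete probability measure
(point masses `p`) be a discrete probability space representation of `M`. Then `M` is
entropic: there is `λ > 0` with `r(A) = λ·H(X_A)` for every `A`, the defining sum of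
`H(X_A)` converging for every `A`. -/
theorem statement19 {α : Type*} [Fintype α] [DecidableEq α] (r : Finset α → ℕ)
    (hr_le : ∀ A : Finset α, r A ≤ A.card)
    (hr_mono : ∀ ⦃A B : Finset α⦄, A ⊆ B → r A ≤ r B)
    (hr_submod : ∀ A B : Finset α, r (A ∪ B) + r (A ∩ B) ≤ r A + r B)
    -- connected: every two distinct elements lie in a common circuit
    (hconn : ∀ e e' : α, e ≠ e' → ∃ C : Finset α,
      (r C ≠ C.card ∧ ∀ D ⊂ C, r D = D.card) ∧ e ∈ C ∧ e' ∈ C)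
    -- rank at least two
    (hrk : 2 ≤ r Finset.univ)
    {Ω : Type*} (p : Ω → ℝ) (hp0 : ∀ ω, 0 ≤ p ω) (hp1 : ∑' ω, p ω = 1)
    (Ωe : α → Type*) (X : ∀ e, Ω → Ωe e)
    -- independence
    (hindep : ∀ A : Finset α, r A = A.card → ∀ y : (e : ↥A) → Ωe e.1,
      prMass p (jointRV X A) y = ∏ e : ↥A, prMass p (X e.1) (y e))
    -- determination
    (hdet : ∀ C : Finset α, r C ≠ C.card → (∀ D ⊂ C, r D = D.card) → ∀ x ∈ C,
      ∃ f : ((e : ↥(C.erase x)) → Ωe e.1) → Ωe x,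
        ∀ ω, X x ω = f (jointRV X (C.erase x) ω))
    -- nontriviality
    (hnontriv : ∀ e : α, r {e} ≠ 0 →
      ∃ ω ω', 0 < p ω ∧ 0 < p ω' ∧ X e ω ≠ X e ω') :
    ∃ lam : ℝ, 0 < lam ∧
      (∀ A : Finset α,
        Summable fun y : (e : ↥A) → Ωe e.1 => Real.negMulLog (prMass p (jointRV X A) y)) ∧
      (∀ A : Finset α, (r A : ℝ) = lam * entropy p (jointRV X A)) := by
  have hs : Summable p := by
    by_contra h
    rw [tsum_eq_zero_of_not_summable h] at hp1
    exact zero_ne_one hp1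
  -- the joint map agrees at two points iff all coordinates agree
  have hj : ∀ (A : Finset α) (w ω : Ω),
      jointRV X A w = jointRV X A ω ↔ ∀ e ∈ A, X e w = X e ω := by
    intro A w ω
    constructor
    · intro h e he
      exact congrFun h ⟨e, he⟩
    · intro h
      funext e
      exact h e.1 e.2
  have hfpos : ∀ ω, 0 < p ω → ∀ e, 0 < prMass p (X e) (X e ω) :=
    fun ω h e => aux_mass_pos hp0 hs (X e) ω h
  have hind : ∀ A : Finset α, r A = A.card → ∀ ω,
      prMass p (jointRV X A) (jointRV X A ω) = ∏ e ∈ A, prMass p (X e) (X e ω) := by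
    intro A hA ω
    rw [hindep A hA, ← Finset.prod_coe_sort A]
    rfl
  have hdet' : ∀ C : Finset α, r C ≠ C.card → (∀ D ⊂ C, r D = D.card) → ∀ x ∈ C,
      ∀ w ω, (∀ e ∈ C.erase x, X e w = X e ω) → X x w = X x ω := by
    intro C h1 h2 x hx w ω h
    obtain ⟨f, hf⟩ := hdet C h1 h2 x hx
    rw [hf, hf, (hj _ w ω).2 h]
  -- any two elements have equal atoms
  have heq : ∀ ω, 0 < p ω → ∀ x y, prMass p (X x) (X x ω) = prMass p (X y) (X y ω) := by
    intro ω hω x y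
    by_cases hxy : x = y
    · rw [hxy]
    obtain ⟨C, ⟨h1, h2⟩, hx, hy⟩ := hconn x y hxy
    have e1 := hind (C.erase x) (h2 _ (Finset.erase_ssubset hx)) ω
    have e2 := hind (C.erase y) (h2 _ (Finset.erase_ssubset hy)) ω
    have key : ∀ z ∈ C, ∀ w, jointRV X (C.erase z) w = jointRV X (C.erase z) ω ↔
        jointRV X C w = jointRV X C ω := by
      intro z hz w
      rw [hj, hj]
      constructor
      · intro h e he
        by_cases hez : e = z
        · rw [hez]; exact hdet' C h1 h2 z hz w ω h
        · exact h e (Finset.mem_erase.2 ⟨hez, he⟩)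
      · intro h e he
        exact h e (Finset.mem_of_mem_erase he)
    rw [aux_mass_congr _ _ _ _ (key x hx)] at e1
    rw [aux_mass_congr _ _ _ _ (key y hy)] at e2
    have m1 := Finset.mul_prod_erase C (fun e => prMass p (X e) (X e ω)) hx
    have m2 := Finset.mul_prod_erase C (fun e => prMass p (X e) (X e ω)) hy
    rw [← e1, ← m2, ← e2] at m1
    exact mul_right_cancel₀ (aux_mass_pos hp0 hs (jointRV X C) ω hω).ne' m1
  -- an independent pair
  obtain ⟨B0, -, hB0, hB0r⟩ := aux_basis hr_le hr_mono hr_submod Finset.univ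
  obtain ⟨u, hu, v, hv, huv⟩ := Finset.one_lt_card.1 (show 1 < B0.card by omega)
  have hpair : r {u, v} = ({u, v} : Finset α).card :=
    aux_indep_subset hr_le hr_submod hB0 (by
      intro z hz
      simp only [Finset.mem_insert, Finset.mem_singleton] at hz
      rcases hz with rfl | rfl <;> assumption)
  have hu1 : r {u} = 1 := by
    have := aux_indep_subset hr_le hr_submod hB0 (Finset.singleton_subset_iff.2 hu)
    simpa using this
  have hconst : ∀ ω ω', 0 < p ω → 0 < p ω' →
      prMass p (X u) (X u ω) = prMass p (X u) (X u ω') := by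
    intro ω ω' h h'
    have h1 := hindep {u, v} hpair (fun e => if e.1 = u then X e.1 ω else X e.1 ω')
    obtain ⟨w, hw, hwy⟩ := aux_mass_exists hp0 (jointRV X {u, v})
      (fun e => if e.1 = u then X e.1 ω else X e.1 ω') (by
        rw [h1]
        refine (Finset.prod_pos fun e _ => ?_).ne'
        split_ifs
        · exact hfpos ω h _
        · exact hfpos ω' h' _)
    have a1 : X u w = X u ω := by
      have := congrFun hwy ⟨u, by simp⟩
      simpa [jointRV] using this
    have a2 : X v w = X v ω' := by
      have := congrFun hwy ⟨v, by simp⟩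
      simpa [jointRV, Ne.symm huv] using this
    rw [← a1, heq w hw u v, a2, heq ω' h' v u]
  obtain ⟨ω₀, ω₁, hω₀, hω₁, hne⟩ := hnontriv u (by omega)
  obtain ⟨q, hq⟩ : ∃ q, q = prMass p (X u) (X u ω₀) := ⟨_, rfl⟩
  have hqpos : 0 < q := hq ▸ hfpos ω₀ hω₀ u
  have hqall : ∀ ω, 0 < p ω → ∀ e, prMass p (X e) (X e ω) = q := by
    intro ω hω e
    rw [heq ω hω e u, hconst ω ω₀ hω hω₀, hq]
  have hq1 : q < 1 := by
    have hsum := aux_mass_hasSum hs (X u)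
    rw [hp1] at hsum
    classical
    have h2 := sum_le_hasSum {X u ω₀, X u ω₁} (fun i _ => aux_mass_nonneg hp0 (X u) i) hsum
    rw [Finset.sum_pair hne, hqall ω₀ hω₀, hqall ω₁ hω₁] at h2
    linarith
  have hlog : 0 < -Real.log q := by
    have := Real.log_neg hqpos hq1
    linarith
  have hmass : ∀ (A : Finset α) (ω : Ω), 0 < p ω →
      prMass p (jointRV X A) (jointRV X A ω) = q ^ r A := by
    intro A ω hω
    obtain ⟨B, hBA, hB, hBr⟩ := aux_basis hr_le hr_mono hr_submod A
    have key : ∀ w, jointRV X A w = jointRV X A ω ↔ jointRV X B w = jointRV X B ω := by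
      intro w
      rw [hj, hj]
      refine ⟨fun h e he => h e (hBA he), fun h x hx => ?_⟩
      by_cases hxB : x ∈ B
      · exact h x hxB
      have hdep : r (insert x B) ≠ (insert x B).card := by
        have h1 := hr_mono (Finset.insert_subset hx hBA)
        rw [Finset.card_insert_of_notMem hxB]
        omega
      obtain ⟨C, hC, h1, h2⟩ := aux_circuit hdep
      have hxC : x ∈ C := by
        by_contra hxC
        exact h1 (aux_indep_subset hr_le hr_submod hB
          ((Finset.subset_insert_iff_of_notMem hxC).1 hC))
      refine hdet' C h1 h2 x hxC w ω fun e he => h e ?_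
      rw [Finset.mem_erase] at he
      exact (Finset.mem_insert.1 (hC he.2)).resolve_left he.1
    rw [aux_mass_congr _ _ _ _ key, hind B hB, Finset.prod_congr rfl (fun e _ => hqall ω hω e),
      Finset.prod_const, ← hB, hBr]
  have hHas : ∀ A : Finset α, HasSum
      (fun y : (e : ↥A) → Ωe e.1 => Real.negMulLog (prMass p (jointRV X A) y))
      (r A * (-Real.log q)) := by
    intro A
    have h := (aux_mass_hasSum hs (jointRV X A)).mul_right (r A * (-Real.log q))
    rw [hp1, one_mul] at h
    suffices hfun : (fun y : (e : ↥A) → Ωe e.1 => Real.negMulLog (prMass p (jointRV X A) y)) =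
        fun y => prMass p (jointRV X A) y * (r A * (-Real.log q)) by
      rw [hfun]; exact h
    funext y
    by_cases hy : prMass p (jointRV X A) y = 0
    · rw [hy]; simp
    · obtain ⟨ω, hω, rfl⟩ := aux_mass_exists hp0 _ _ hy
      rw [hmass A ω hω, Real.negMulLog, Real.log_pow]
      ring
  refine ⟨(-Real.log q)⁻¹, inv_pos.2 hlog, fun A => (hHas A).summable, fun A => ?_⟩
  rw [entropy, (hHas A).tsum_eq]
  rw [mul_comm, mul_assoc, mul_inv_cancel₀ hlog.ne', mul_one]
end
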